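/- For all positive integers p ≥ q ≥ 2t + 1 (with t ≥ 1), the anti-Ramsey number of t edge-disjoint rainbow spanning trees in the complete bipartite graph K_{p,q} equals (p-2)q + t + δ_{pq}, where δ_{pq} = 1 if p = q and 0 otherwise. -/

import Mathlib

open Finset
open scoped Classical

/-- The set of non-crossing edges of `G` with respect to a partition `P` of the
vertex set: edges whose two endpoints lie in the same part of `P`. -/
noncomputable def edgesNonCrossing {V : Type} [Fintype V] (G : SimpleGraph V)
    (P : Finpartition (Finset.univ : Finset V)) : Finset (Sym2 V) :=
  G.edgeFinset.filter (fun e => ∃ p ∈ P.parts, ∀ v ∈ e, v ∈ p)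

/-- The set of crossing edges of `G` with respect to a partition `P` of the
vertex set: edges whose endpoints lie in different parts of `P`. -/
noncomputable def edgesCrossing {V : Type} [Fintype V] (G : SimpleGraph V)
    (P : Finpartition (Finset.univ : Finset V)) : Finset (Sym2 V) :=
  G.edgeFinset.filter (fun e => ¬ ∃ p ∈ P.parts, ∀ v ∈ e, v ∈ p)

/-- `G`, edge-colored by `c`, contains `t` pairwise edge-disjoint rainbow
spanning trees. -/
def HasRainbowSpanningTrees {V : Type} [Fintype V] (G : SimpleGraph V)
    (c : Sym2 V → ℕ) (t : ℕ) : Prop :=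
  ∃ T : Fin t → SimpleGraph V,
    (∀ i, T i ≤ G) ∧ (∀ i, (T i).IsTree) ∧
    (∀ i, Set.InjOn c ((T i).edgeSet)) ∧
    (∀ i j, i ≠ j → Disjoint ((T i).edgeSet) ((T j).edgeSet))

/-- The anti-Ramsey number `r(G,t)`: the maximum number of colors in an
edge-coloring of `G` containing no `t` pairwise edge-disjoint rainbow spanning
trees. -/
noncomputable def antiRamsey {V : Type} [Fintype V] (G : SimpleGraph V) (t : ℕ) : ℕ :=
  sSup {m | ∃ c : Sym2 V → ℕ, (G.edgeFinset.image c).card = m ∧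
    ¬ HasRainbowSpanningTrees G c t}

/-- `max_{P : |P| ≥ 3} { |E(P,G)| + t(|P|-2) }`. -/
noncomputable def maxNonCross3 {V : Type} [Fintype V] (G : SimpleGraph V) (t : ℕ) : ℕ :=
  sSup {m | ∃ P : Finpartition (Finset.univ : Finset V), 3 ≤ P.parts.card ∧
    m = (edgesNonCrossing G P).card + t * (P.parts.card - 2)}

/-- `f_G(s)`: the maximum of `|E(P,G)|` over partitions of the vertex set into
exactly `s` parts. -/
noncomputable def fMax {V : Type} [Fintype V] (G : SimpleGraph V) (s : ℕ) : ℕ :=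
  sSup {m | ∃ P : Finpartition (Finset.univ : Finset V), P.parts.card = s ∧
    m = (edgesNonCrossing G P).card}

/-- The number of edges of `G` induced by a set `p` of vertices. -/
noncomputable def edgesWithin {V : Type} [Fintype V] (G : SimpleGraph V) (p : Finset V) : ℕ :=
  (G.edgeFinset.filter (fun e => ∀ v ∈ e, v ∈ p)).card

/-- One splitting step: remove a single vertex from a currently largest part
(measured by the number of non-crossing edges it induces) to form a new
singleton part. -/
def SplitStep {V : Type} [Fintype V] (G : SimpleGraph V)
    (P Q : Finpartition (Finset.univ : Finset V)) : Prop :=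
  ∃ p ∈ P.parts, (∀ q ∈ P.parts, edgesWithin G q ≤ edgesWithin G p) ∧
    ∃ v ∈ p, p.erase v ≠ ∅ ∧
      Q.parts = insert {v} (insert (p.erase v) (P.parts.erase p))


/-- Linear Rado-type theorem: colour classes can be thinned to single elements. -/
theorem linRado {ι W : Type} [AddCommGroup W] [Module ℚ W] [FiniteDimensional ℚ W]
    (φ : ι → W →ₗ[ℚ] ℚ) (κ : ι → ℕ) (W0 : Submodule ℚ W) (n : ℕ) : ∀ (X : Finset ι), X.card = n →
    (∀ U : Submodule ℚ W, U ≤ W0 → Module.finrank ℚ U ≤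
      ((X.filter (fun x => ∃ f ∈ U, φ x f ≠ 0)).image κ).card) →
    ∃ Y ⊆ X, Set.InjOn κ (Y : Set ι) ∧ ∀ U : Submodule ℚ W, U ≤ W0 → Module.finrank ℚ U ≤
      ((Y.filter (fun x => ∃ f ∈ U, φ x f ≠ 0)).image κ).card := by
  induction n with
  | zero =>
    intro X hX h
    refine ⟨X, Subset.refl _, ?_, h⟩
    rw [Finset.card_eq_zero] at hX
    subst hX
    simp
  | succ n ih =>
    intro X hX h
    by_cases hinj : Set.InjOn κ (X : Set ι)
    · exact ⟨X, Subset.refl _, hinj, h⟩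
    simp only [Set.InjOn, not_forall] at hinj
    obtain ⟨x, hx, y, hy, hxy, hne⟩ := hinj
    have hx : x ∈ X := hx
    have hy : y ∈ X := hy
    by_cases h1 : ∀ U : Submodule ℚ W, U ≤ W0 → Module.finrank ℚ U ≤
      (((X.erase x).filter (fun x => ∃ f ∈ U, φ x f ≠ 0)).image κ).card
    · obtain ⟨Y, hY, hh⟩ := ih (X.erase x) (by rw [card_erase_of_mem hx, hX]; rfl) h1
      exact ⟨Y, hY.trans (erase_subset _ _), hh⟩
    by_cases h2 : ∀ U : Submodule ℚ W, U ≤ W0 → Module.finrank ℚ U ≤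
      (((X.erase y).filter (fun x => ∃ f ∈ U, φ x f ≠ 0)).image κ).card
    · obtain ⟨Y, hY, hh⟩ := ih (X.erase y) (by rw [card_erase_of_mem hy, hX]; rfl) h2
      exact ⟨Y, hY.trans (erase_subset _ _), hh⟩
    exfalso
    push Not at h1 h2
    obtain ⟨U1, hU1, h1⟩ := h1
    obtain ⟨U2, hU2, h2⟩ := h2
    set I1 := ((X.erase x).filter (fun x => ∃ f ∈ U1, φ x f ≠ 0)).image κ with hI1
    set I2 := ((X.erase y).filter (fun x => ∃ f ∈ U2, φ x f ≠ 0)).image κ with hI2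
    have m1 : ∀ z ∈ X, z ≠ x → (∃ f ∈ U1, φ z f ≠ 0) → κ z ∈ I1 := by
      intro z hz hzx hf
      exact mem_image_of_mem _ (mem_filter.2 ⟨mem_erase.2 ⟨hzx, hz⟩, hf⟩)
    have m2 : ∀ z ∈ X, z ≠ y → (∃ f ∈ U2, φ z f ≠ 0) → κ z ∈ I2 := by
      intro z hz hzx hf
      exact mem_image_of_mem _ (mem_filter.2 ⟨mem_erase.2 ⟨hzx, hz⟩, hf⟩)
    have n1 : κ x ∉ I1 := by
      intro hc
      have := h U1 hU1
      have hsub : (X.filter (fun x => ∃ f ∈ U1, φ x f ≠ 0)).image κ ⊆ I1 := by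
        intro k hk
        obtain ⟨z, hz, rfl⟩ := mem_image.1 hk
        obtain ⟨hz, hf⟩ := mem_filter.1 hz
        by_cases hzx : z = x
        · rw [hzx]; exact hc
        · exact m1 z hz hzx hf
      have := card_le_card hsub
      omega
    have n2 : κ y ∉ I2 := by
      intro hc
      have := h U2 hU2
      have hsub : (X.filter (fun x => ∃ f ∈ U2, φ x f ≠ 0)).image κ ⊆ I2 := by
        intro k hk
        obtain ⟨z, hz, rfl⟩ := mem_image.1 hk
        obtain ⟨hz, hf⟩ := mem_filter.1 hz
        by_cases hzx : z = y
        · rw [hzx]; exact hc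
        · exact m2 z hz hzx hf
      have := card_le_card hsub
      omega
    have hsup := h (U1 ⊔ U2) (sup_le hU1 hU2)
    have hinf := h (U1 ⊓ U2) (inf_le_left.trans hU1)
    have hmod := Submodule.finrank_sup_add_finrank_inf_eq U1 U2
    have s1 : (X.filter (fun x => ∃ f ∈ U1 ⊔ U2, φ x f ≠ 0)).image κ ⊆ insert (κ x) (I1 ∪ I2) := by
      intro k hk
      obtain ⟨z, hz, rfl⟩ := mem_image.1 hk
      obtain ⟨hz, f, hf, hf0⟩ := mem_filter.1 hz
      obtain ⟨f1, hf1, f2, hf2, rfl⟩ := Submodule.mem_sup.1 hf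
      by_cases hzx : z = x
      · simp [hzx]
      by_cases hzy : z = y
      · simp [hzy, hxy]
      have : φ z f1 ≠ 0 ∨ φ z f2 ≠ 0 := by
        by_contra hcon
        push Not at hcon
        exact hf0 (by rw [map_add, hcon.1, hcon.2, add_zero])
      rcases this with h' | h'
      · exact mem_insert_of_mem (mem_union_left _ (m1 z hz hzx ⟨f1, hf1, h'⟩))
      · exact mem_insert_of_mem (mem_union_right _ (m2 z hz hzy ⟨f2, hf2, h'⟩))
    have s2 : (X.filter (fun x => ∃ f ∈ U1 ⊓ U2, φ x f ≠ 0)).image κ ⊆ I1 ∩ I2 := by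
      intro k hk
      obtain ⟨z, hz, rfl⟩ := mem_image.1 hk
      obtain ⟨hz, f, hf, hf0⟩ := mem_filter.1 hz
      obtain ⟨hf1, hf2⟩ := Submodule.mem_inf.1 hf
      by_cases hzx : z = x
      · subst hzx
        exact absurd (hxy ▸ m2 z hz hne ⟨f, hf2, hf0⟩) n2
      by_cases hzy : z = y
      · subst hzy
        exact absurd (hxy ▸ m1 z hz (fun h => hne h.symm) ⟨f, hf1, hf0⟩) n1
      exact mem_inter.2 ⟨m1 z hz hzx ⟨f, hf1, hf0⟩, m2 z hz hzy ⟨f, hf2, hf0⟩⟩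
    have c1 := card_le_card s1
    have c2 := card_le_card s2
    have c3 := card_insert_le (κ x) (I1 ∪ I2)
    have c4 := card_union_add_card_inter I1 I2
    omega

/-- Colour-disjoint packing of `t` connecting edge sets, from the partition condition. -/
theorem packing {V ε : Type} [Fintype V] (S : Finset V) (v0 : V) (hv0 : v0 ∈ S)
    (E : Finset ε) (src tgt : ε → V) (hs : ∀ e ∈ E, src e ∈ S ∧ tgt e ∈ S) (κ : ε → ℕ) (t : ℕ)
    (H : ∀ (L : Type) (lab : V → L), t * ((S.image lab).card - 1) ≤
      ((E.filter (fun e => lab (src e) ≠ lab (tgt e))).image κ).card) :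
    ∃ F : Fin t → Finset ε, (∀ i, F i ⊆ E) ∧
      (∀ i j e e', e ∈ F i → e' ∈ F j → κ e = κ e' → i = j ∧ e = e') ∧
      ∀ i (g : V → Prop), (∀ e ∈ F i, (g (src e) ↔ g (tgt e))) →
        ∀ x ∈ S, (g x ↔ g v0) := by
  let W0 : Submodule ℚ (Fin t → V → ℚ) :=
    { carrier := {f | ∀ i v, (v ∉ S ∨ v = v0) → f i v = 0}
      add_mem' := by
        intro a b ha hb i v hv
        simp [ha i v hv, hb i v hv]
      zero_mem' := by intro i v _; rfl
      smul_mem' := by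
        intro c a ha i v hv
        simp [ha i v hv] }
  let φ : ε × Fin t → (Fin t → V → ℚ) →ₗ[ℚ] ℚ := fun x =>
    { toFun := fun f => f x.2 (src x.1) - f x.2 (tgt x.1)
      map_add' := by intro a b; simp; ring
      map_smul' := by intro a b; simp; ring }
  have hφ : ∀ e i f, φ (e, i) f = f i (src e) - f i (tgt e) := fun _ _ _ => rfl
  obtain ⟨Y, hY, hinj, hYc⟩ := linRado φ (fun x => κ x.1) W0 _ (E ×ˢ (univ : Finset (Fin t))) rfl (by
    intro U hU
    let lab : V → (U → Fin t → ℚ) := fun v f i => (f : Fin t → V → ℚ) i v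
    have h1 := H _ lab
    have hsub : (E.filter (fun e => lab (src e) ≠ lab (tgt e))).image κ ⊆
        ((E ×ˢ (univ : Finset (Fin t))).filter (fun x => ∃ f ∈ U, φ x f ≠ 0)).image
          (fun x => κ x.1) := by
      intro k hk
      obtain ⟨e, he, rfl⟩ := mem_image.1 hk
      obtain ⟨he, hne⟩ := mem_filter.1 he
      have : ∃ f : U, ∃ i, lab (src e) f i ≠ lab (tgt e) f i := by
        by_contra hcon
        push Not at hcon
        exact hne (funext fun f => funext fun i => hcon f i)
      obtain ⟨f, i, hfi⟩ := this
      refine mem_image.2 ⟨(e, i), mem_filter.2 ⟨by simp [he], f, f.2, ?_⟩, rfl⟩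
      rw [hφ]
      exact sub_ne_zero.2 hfi
    refine le_trans ?_ (h1.trans (card_le_card hsub))
    let T := {l // l ∈ (S.image lab).erase (lab v0)}
    have hrep : ∀ l : T, ∃ v : V, lab v = l.1 := by
      intro l
      obtain ⟨v, _, hv⟩ := mem_image.1 (mem_of_mem_erase l.2)
      exact ⟨v, hv⟩
    choose rep hrep using hrep
    let Ψ : U →ₗ[ℚ] (Fin t × T → ℚ) :=
      { toFun := fun f x => (f : Fin t → V → ℚ) x.1 (rep x.2)
        map_add' := by intro a b; rfl
        map_smul' := by intro a b; rfl }
    have hΨ : Function.Injective Ψ := by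
      rw [injective_iff_map_eq_zero]
      intro f hf
      ext i v
      have hW := hU f.2
      by_cases hv : v ∈ S
      · by_cases hl : lab v = lab v0
        · have := congrFun (congrFun hl f) i
          have h2 := hW i v0 (Or.inr rfl)
          exact this.trans h2
        · have hm : lab v ∈ (S.image lab).erase (lab v0) :=
            mem_erase.2 ⟨hl, mem_image_of_mem _ hv⟩
          have h2 := congrFun hf (i, ⟨lab v, hm⟩)
          have h3 := congrFun (congrFun (hrep ⟨lab v, hm⟩) f) i
          exact h3.symm.trans h2
      · exact hW i v (Or.inl hv)
    have := LinearMap.finrank_le_finrank_of_injective hΨ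
    rw [Module.finrank_fintype_fun_eq_card, Fintype.card_prod, Fintype.card_fin,
      Fintype.card_coe, card_erase_of_mem (mem_image_of_mem _ hv0)] at this
    exact this)
  refine ⟨fun i => E.filter (fun e => (e, i) ∈ Y), fun i => filter_subset _ _, ?_, ?_⟩
  · intro i j e e' he he' hk
    have := hinj (mem_filter.1 he).2 (mem_filter.1 he').2 hk
    exact ⟨(Prod.mk.inj this).2, (Prod.mk.inj this).1⟩
  · intro i g hg x hx
    by_contra hcon
    let f : Fin t → V → ℚ := fun j v => if j = i ∧ v ∈ S ∧ ¬ (g v ↔ g v0) then 1 else 0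
    have hf0 : f ≠ 0 := by
      intro h
      have := congrFun (congrFun h i) x
      simp [f, hx, hcon] at this
    have hfW : f ∈ W0 := by
      intro j v hv
      simp only [f]
      rw [if_neg]
      rintro ⟨_, h1, h2⟩
      rcases hv with hv | hv
      · exact hv h1
      · exact h2 (by rw [hv])
    have := hYc (Submodule.span ℚ {f}) (by
      rw [Submodule.span_singleton_le_iff_mem]; exact hfW)
    rw [finrank_span_singleton hf0] at this
    have hpos : 0 < _ := this
    rw [card_pos] at hpos
    obtain ⟨k, hk⟩ := hpos
    obtain ⟨⟨e, j⟩, hz, _⟩ := mem_image.1 hk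
    obtain ⟨hzY, f', hf', hne⟩ := mem_filter.1 hz
    obtain ⟨c, rfl⟩ := Submodule.mem_span_singleton.1 hf'
    apply hne
    have heE : e ∈ E := (mem_product.1 (hY hzY)).1
    rw [map_smul, hφ]
    have : f j (src e) = f j (tgt e) := by
      by_cases hji : j = i
      · subst hji
        have := hg e (mem_filter.2 ⟨heE, hzY⟩)
        simp [f, (hs e heE).1, (hs e heE).2, this]
      · simp [f, hji]
    rw [this, sub_self, smul_zero]

theorem mergeBlocks {L : Type} (a b : L → ℕ) (J : Finset L) (hJ : ∀ l ∈ J, 1 ≤ a l + b l)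
    (x y : ℕ) (hxy : 1 ≤ x + y) :
    ∃ x' y', x' ≤ x + ∑ l ∈ J, a l ∧ y' ≤ y + ∑ l ∈ J, b l ∧
      x' + y' + J.card = x + y + ∑ l ∈ J, a l + ∑ l ∈ J, b l ∧ 1 ≤ x' + y' ∧
      x * y + ∑ l ∈ J, a l * b l ≤ x' * y' := by
  induction J using Finset.induction_on with
  | empty => exact ⟨x, y, by simp, by simp, by simp, hxy, by simp⟩
  | insert l J hl ih =>
    obtain ⟨x1, y1, h1, h2, h3, h4, h5⟩ := ih (fun l hl => hJ l (mem_insert_of_mem hl))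
    have h6 := hJ l (mem_insert_self _ _)
    rw [sum_insert hl, sum_insert hl, sum_insert hl, card_insert_of_notMem hl]
    generalize a l = c at *
    generalize b l = d at *
    generalize ∑ l ∈ J, a l = A at *
    generalize ∑ l ∈ J, b l = B at *
    generalize ∑ l ∈ J, a l * b l = N at *
    by_cases hA : 1 ≤ x1 ∧ 1 ≤ c
    · obtain ⟨hx1, hc⟩ := hA
      obtain ⟨c, rfl⟩ := Nat.exists_eq_add_of_le' hc
      refine ⟨x1 + c, y1 + d, by omega, by omega, by omega, by omega, ?_⟩
      nlinarith [Nat.mul_le_mul_right d hx1, Nat.zero_le (c * y1)]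
    by_cases hB : 1 ≤ y1 ∧ 1 ≤ d
    · obtain ⟨hx1, hc⟩ := hB
      obtain ⟨d, rfl⟩ := Nat.exists_eq_add_of_le' hc
      refine ⟨x1 + c, y1 + d, by omega, by omega, by omega, by omega, ?_⟩
      nlinarith [Nat.mul_le_mul_right c hx1, Nat.zero_le (d * x1)]
    have hz : x1 * y1 + c * d = 0 := by
      rcases Nat.eq_zero_or_pos x1 with h | h <;> rcases Nat.eq_zero_or_pos y1 with h' | h' <;>
      rcases Nat.eq_zero_or_pos c with h'' | h'' <;> rcases Nat.eq_zero_or_pos d with h''' | h''' <;>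
      first | omega | simp [*]
    have hN : x * y + (c * d + N) ≤ 0 := by omega
    by_cases hc : 1 ≤ c
    · exact ⟨x1 + c - 1, y1 + d, by omega, by omega, by omega, by omega, by
        exact hN.trans (Nat.zero_le _)⟩
    · exact ⟨x1 + c, y1 + d - 1, by omega, by omega, by omega, by omega, by
        exact hN.trans (Nat.zero_le _)⟩

theorem mergeTwo (c d c' d' : ℕ) (h : 2 ≤ c + d) (h' : 2 ≤ c' + d') :
    ∃ x y, x ≤ c + c' ∧ y ≤ d + d' ∧ x + y + 2 = c + c' + d + d' ∧ c * d + c' * d' ≤ x * y + 1 := by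
  rcases Nat.eq_zero_or_pos c with h1 | h1
  · subst h1
    exact ⟨c', d + d' - 2, by omega, by omega, by omega, by
      have := Nat.mul_le_mul_left c' (show d' ≤ d + d' - 2 by omega); omega⟩
  rcases Nat.eq_zero_or_pos d with h2 | h2
  · subst h2
    exact ⟨c + c' - 2, d', by omega, by omega, by omega, by
      have := Nat.mul_le_mul_right d' (show c' ≤ c + c' - 2 by omega); omega⟩
  rcases Nat.eq_zero_or_pos c' with h3 | h3
  · subst h3
    exact ⟨c, d + d' - 2, by omega, by omega, by omega, by
      have := Nat.mul_le_mul_left c (show d ≤ d + d' - 2 by omega); omega⟩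
  rcases Nat.eq_zero_or_pos d' with h4 | h4
  · subst h4
    exact ⟨c + c' - 2, d, by omega, by omega, by omega, by
      have := Nat.mul_le_mul_right d (show c ≤ c + c' - 2 by omega); omega⟩
  obtain ⟨c, rfl⟩ := Nat.exists_eq_add_of_le' h1
  obtain ⟨d, rfl⟩ := Nat.exists_eq_add_of_le' h2
  obtain ⟨c', rfl⟩ := Nat.exists_eq_add_of_le' h3
  obtain ⟨d', rfl⟩ := Nat.exists_eq_add_of_le' h4
  exact ⟨c + c' + 1, d + d' + 1, by omega, by omega, by omega, by
    nlinarith [Nat.zero_le (c * d'), Nat.zero_le (c' * d)]⟩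

theorem numTwo (p q x y : ℕ) (hq : 3 ≤ q) (hpq : q ≤ p) (hx : x ≤ p) (hy : y ≤ q)
    (h : x + y + 2 = p + q) : x * y ≤ (p - 2) * q + (if p = q then 1 else 0) := by
  obtain ⟨a, rfl⟩ := Nat.exists_eq_add_of_le hx
  obtain ⟨b, rfl⟩ := Nat.exists_eq_add_of_le hy
  have hab : a + b = 2 := by omega
  have : (a = 0 ∧ b = 2) ∨ (a = 1 ∧ b = 1) ∨ (a = 2 ∧ b = 0) := by omega
  rcases this with ⟨rfl, rfl⟩ | ⟨rfl, rfl⟩ | ⟨rfl, rfl⟩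
  · obtain ⟨x, rfl⟩ := Nat.exists_eq_add_of_le' (show 2 ≤ x by omega)
    simp only [add_zero, Nat.add_sub_cancel]
    nlinarith [Nat.zero_le (if x + 2 = y + 2 then 1 else 0)]
  · obtain ⟨x, rfl⟩ := Nat.exists_eq_add_of_le' (show 1 ≤ x by omega)
    have : x + 1 + 1 - 2 = x := by omega
    rw [this]
    split_ifs with h
    · nlinarith
    · have : y ≤ x := by omega
      nlinarith
  · simp

theorem numThree (p q t x y σ : ℕ) (ht : 0 < t) (hq : 2 * t + 1 ≤ q) (hpq : q ≤ p) (hx : x ≤ p)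
    (hy : y ≤ q) (h : x + y + σ = p + q) (h1 : 1 ≤ x + y) (hσ : 3 ≤ σ) :
    x * y + t * σ ≤ (p - 2) * q + t + (if p = q then 1 else 0) + 1 := by
  suffices hh : (x * y + t * σ : ℤ) + 0 ≤ ((p:ℤ) - 2) * q + t + (if p = q then 1 else 0) + 1 by
    have h2 : ((p - 2 : ℕ) : ℤ) = (p:ℤ) - 2 := by omega
    zify
    rw [h2]
    simpa using hh
  have hδ : (0:ℤ) ≤ (if p = q then 1 else 0) := by split_ifs <;> norm_num
  have key : (x * y + t * σ : ℤ) ≤ ((p:ℤ) - 2) * q + t + 1 := by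
    obtain ⟨P, rfl⟩ := Nat.exists_eq_add_of_le' (show t ≤ p by omega)
    obtain ⟨Q, rfl⟩ := Nat.exists_eq_add_of_le' (show t ≤ q by omega)
    have hσ' : (σ : ℤ) = P + t + Q + t - x - y := by omega
    rw [hσ']
    push_cast
    -- (x - t)(y - t) form
    suffices (2 * Q + t - 1 : ℤ) ≤ P * Q - (x - t) * (y - t) by nlinarith
    have hQ : (t + 1 : ℤ) ≤ Q := by omega
    have hP : (Q : ℤ) ≤ P := by omega
    have hx' : (x : ℤ) ≤ P + t := by omega
    have hy' : (y : ℤ) ≤ Q + t := by omega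
    have ht' : (1 : ℤ) ≤ t := by omega
    have hbase : (2 * Q + t - 1 : ℤ) ≤ P * Q := by nlinarith
    rcases le_total (t : ℤ) x with hxt | hxt <;> rcases le_total (t:ℤ) y with hyt | hyt
    · -- both nonneg
      have hsum : (x - t : ℤ) + (y - t) ≤ P + Q - 3 := by omega
      generalize hu : (x - t : ℤ) = u at *
      generalize hv : (y - t : ℤ) = v at *
      have hu0 : 0 ≤ u := by omega
      have hv0 : 0 ≤ v := by omega
      have huP : u ≤ P := by omega
      have hvQ : v ≤ Q := by omega
      clear hu hv hσ' h hx' hy' hx hy hδ h1 hσ hxt hyt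
      by_cases hvc : v = Q
      · have h3 : u ≤ P - 3 := by omega
        have h4 := mul_le_mul_of_nonneg_right h3 hv0
        rw [hvc] at h4 ⊢
        linarith
      by_cases hvc1 : v = Q - 1
      · have h3 : u ≤ P - 2 := by omega
        have h4 := mul_le_mul_of_nonneg_right h3 hv0
        rw [hvc1] at h4 ⊢
        linarith
      have hv2 : v ≤ Q - 2 := by omega
      by_cases huc : u = P
      · have h3 : v ≤ Q - 3 := by omega
        have h4 := mul_le_mul_of_nonneg_left h3 hu0
        rw [huc] at h4 ⊢
        linarith
      have h3 : u ≤ P - 1 := by omega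
      have h1 : u * v ≤ (P - 1) * (Q - 2) := mul_le_mul h3 hv2 hv0 (by omega)
      linarith
    · have := mul_nonneg (sub_nonneg.2 hxt) (sub_nonneg.2 hyt)
      nlinarith
    · have := mul_nonneg (sub_nonneg.2 hxt) (sub_nonneg.2 hyt)
      nlinarith
    · have hx0 : (0:ℤ) ≤ x := by omega
      have hy0 : (0:ℤ) ≤ y := by omega
      have h1' : (1:ℤ) ≤ x + y := by omega
      have h3 : (x - t : ℤ) * (y - t) ≤ t * t - t := by
        nlinarith [mul_nonneg hx0 (sub_nonneg.2 hyt), mul_nonneg hy0 (sub_nonneg.2 hxt)]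
      nlinarith
  linarith

theorem goodPair {ε : Type} (c : ε → ℕ) (t : ℕ) (X Y : Finset ε) (hd : Disjoint X Y)
    (hX : t + 2 ≤ X.card) (hY : t + 2 ≤ Y.card) (hc : t + 3 ≤ ((X ∪ Y).image c).card) :
    ∃ x ∈ X, ∃ y ∈ Y, c x ≠ c y ∧ t + 2 ≤ ((X.erase x ∪ Y.erase y).image c).card := by
  have sub1 : ∀ x ∈ X, ∀ y ∈ Y, c x ≠ c y → (∃ z ∈ X ∪ Y, z ≠ x ∧ c z = c x) →
      t + 2 ≤ ((X.erase x ∪ Y.erase y).image c).card := by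
    rintro x hx y hy hne ⟨z, hz, hzx, hzc⟩
    have : ((X ∪ Y).image c).erase (c y) ⊆ (X.erase x ∪ Y.erase y).image c := by
      intro k hk
      obtain ⟨hk1, hk2⟩ := mem_erase.1 hk
      obtain ⟨w, hw, rfl⟩ := mem_image.1 hk2
      by_cases hwx : w = x
      · subst hwx
        refine mem_image.2 ⟨z, ?_, hzc⟩
        have : z ≠ y := by rintro rfl; exact hne hzc.symm
        simp only [mem_union, mem_erase] at hz ⊢
        tauto
      · have : w ≠ y := by rintro rfl; exact hk1 rfl
        refine mem_image_of_mem _ ?_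
        simp only [mem_union, mem_erase] at hw ⊢
        tauto
    have h1 := card_le_card this
    have h2 := pred_card_le_card_erase (s := (X ∪ Y).image c) (a := c y)
    omega
  have sub2 : ∀ x ∈ X, ∀ y ∈ Y, c x ≠ c y → (∃ z ∈ X ∪ Y, z ≠ y ∧ c z = c y) →
      t + 2 ≤ ((X.erase x ∪ Y.erase y).image c).card := by
    rintro x hx y hy hne ⟨z, hz, hzx, hzc⟩
    have : ((X ∪ Y).image c).erase (c x) ⊆ (X.erase x ∪ Y.erase y).image c := by
      intro k hk
      obtain ⟨hk1, hk2⟩ := mem_erase.1 hk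
      obtain ⟨w, hw, rfl⟩ := mem_image.1 hk2
      by_cases hwx : w = y
      · subst hwx
        refine mem_image.2 ⟨z, ?_, hzc⟩
        have : z ≠ x := by rintro rfl; exact hne hzc
        simp only [mem_union, mem_erase] at hz ⊢
        tauto
      · have : w ≠ x := by rintro rfl; exact hk1 rfl
        refine mem_image_of_mem _ ?_
        simp only [mem_union, mem_erase] at hw ⊢
        tauto
    have h1 := card_le_card this
    have h2 := pred_card_le_card_erase (s := (X ∪ Y).image c) (a := c x)
    omega
  have hmono : ∀ C, ∃ w ∈ X ∪ Y, c w ≠ C := by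
    intro C
    by_contra hcon
    push Not at hcon
    have : (X ∪ Y).image c ⊆ {C} := by
      intro k hk
      obtain ⟨w, hw, rfl⟩ := mem_image.1 hk
      simp [hcon w hw]
    have := card_le_card this
    simp at this
    omega
  by_cases hbig : t + 4 ≤ ((X ∪ Y).image c).card
  · have : ∃ x ∈ X, ∃ y ∈ Y, c x ≠ c y := by
      by_contra hcon
      push Not at hcon
      obtain ⟨x0, hx0⟩ := card_pos.1 (show 0 < X.card by omega)
      obtain ⟨y0, hy0⟩ := card_pos.1 (show 0 < Y.card by omega)
      obtain ⟨w, hw, hwc⟩ := hmono (c x0)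
      rcases mem_union.1 hw with hw | hw
      · exact hwc ((hcon w hw y0 hy0).trans (hcon x0 hx0 y0 hy0).symm)
      · exact hwc (hcon x0 hx0 w hw).symm
    obtain ⟨x, hx, y, hy, hne⟩ := this
    refine ⟨x, hx, y, hy, hne, ?_⟩
    have : (((X ∪ Y).image c).erase (c x)).erase (c y) ⊆ (X.erase x ∪ Y.erase y).image c := by
      intro k hk
      obtain ⟨hk1, hk2⟩ := mem_erase.1 hk
      obtain ⟨hk0, hk2⟩ := mem_erase.1 hk2
      obtain ⟨w, hw, rfl⟩ := mem_image.1 hk2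
      have h1 : w ≠ x := by rintro rfl; exact hk0 rfl
      have h2 : w ≠ y := by rintro rfl; exact hk1 rfl
      refine mem_image_of_mem _ ?_
      simp only [mem_union, mem_erase] at hw ⊢
      tauto
    have h1 := card_le_card this
    have h2 := pred_card_le_card_erase (s := (X ∪ Y).image c) (a := c x)
    have h3 := pred_card_le_card_erase (s := ((X ∪ Y).image c).erase (c x)) (a := c y)
    omega
  · have hlt : ((X ∪ Y).image c).card < (X ∪ Y).card := by
      rw [card_union_of_disjoint hd]; omega
    obtain ⟨z, hz, z', hz', hzz, hcz⟩ := exists_ne_map_eq_of_card_lt_of_maps_to hlt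
      (fun x hx => mem_coe.2 (mem_image_of_mem c hx))
    rcases mem_union.1 hz with hzX | hzY
    · by_cases hy : ∃ y ∈ Y, c y ≠ c z
      · obtain ⟨y, hy, hyc⟩ := hy
        exact ⟨z, hzX, y, hy, hyc.symm, sub1 z hzX y hy hyc.symm ⟨z', hz', hzz.symm, hcz.symm⟩⟩
      · push Not at hy
        obtain ⟨y1, hy1, y2, hy2, hne⟩ := one_lt_card.1 (show 1 < Y.card by omega)
        obtain ⟨w, hw, hwc⟩ := hmono (c z)
        have hwX : w ∈ X := by
          rcases mem_union.1 hw with h | h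
          · exact h
          · exact absurd (hy w h) hwc
        have hh : c w ≠ c y1 := by rw [hy y1 hy1]; exact hwc
        exact ⟨w, hwX, y1, hy1, hh, sub2 w hwX y1 hy1 hh
          ⟨y2, mem_union_right _ hy2, hne.symm, by rw [hy y1 hy1, hy y2 hy2]⟩⟩
    · by_cases hy : ∃ y ∈ X, c y ≠ c z
      · obtain ⟨y, hy, hyc⟩ := hy
        exact ⟨y, hy, z, hzY, hyc, sub2 y hy z hzY hyc ⟨z', hz', hzz.symm, hcz.symm⟩⟩
      · push Not at hy
        obtain ⟨y1, hy1, y2, hy2, hne⟩ := one_lt_card.1 (show 1 < X.card by omega)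
        obtain ⟨w, hw, hwc⟩ := hmono (c z)
        have hwX : w ∈ Y := by
          rcases mem_union.1 hw with h | h
          · exact absurd (hy w h) hwc
          · exact h
        have hh : c y1 ≠ c w := by rw [hy y1 hy1]; exact hwc.symm
        exact ⟨y1, hy1, w, hwX, hh, sub1 y1 hy1 w hwX hh
          ⟨y2, mem_union_left _ hy2, hne.symm, by rw [hy y1 hy1, hy y2 hy2]⟩⟩

theorem rainbowMatching {ε : Type} (c : ε → ℕ) (t : ℕ) : ∀ (X Y : Finset ε), Disjoint X Y →
    t + 1 ≤ X.card → t + 1 ≤ Y.card → t + 2 ≤ ((X ∪ Y).image c).card →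
    ∃ e f : Fin (t + 1) → ε, Function.Injective e ∧ Function.Injective f ∧
      (∀ i, e i ∈ X) ∧ (∀ i, f i ∈ Y) ∧ ∀ i, c (e i) ≠ c (f i) := by
  induction t with
  | zero =>
    intro X Y hd hX hY hc
    have : ∃ x ∈ X, ∃ y ∈ Y, c x ≠ c y := by
      by_contra hcon
      push Not at hcon
      obtain ⟨x0, hx0⟩ := card_pos.1 (show 0 < X.card by omega)
      obtain ⟨y0, hy0⟩ := card_pos.1 (show 0 < Y.card by omega)
      have : (X ∪ Y).image c ⊆ {c x0} := by
        intro k hk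
        obtain ⟨w, hw, rfl⟩ := mem_image.1 hk
        rw [mem_singleton]
        rcases mem_union.1 hw with hw | hw
        · exact ((hcon w hw y0 hy0).trans (hcon x0 hx0 y0 hy0).symm)
        · exact (hcon x0 hx0 w hw).symm
      have := card_le_card this
      simp at this
      omega
    obtain ⟨x, hx, y, hy, hne⟩ := this
    exact ⟨fun _ => x, fun _ => y, fun i j _ => Fin.ext (by omega),
      fun i j _ => Fin.ext (by omega), fun _ => hx, fun _ => hy, fun _ => hne⟩
  | succ t ih =>
    intro X Y hd hX hY hc
    obtain ⟨x, hx, y, hy, hne, hc'⟩ := goodPair c t X Y hd (by omega) (by omega) (by omega)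
    obtain ⟨e, f, he, hf, heX, hfY, hef⟩ := ih (X.erase x) (Y.erase y)
      (hd.mono (erase_subset _ _) (erase_subset _ _))
      (by rw [card_erase_of_mem hx]; omega) (by rw [card_erase_of_mem hy]; omega) hc'
    refine ⟨Fin.cons x e, Fin.cons y f, ?_, ?_, ?_, ?_, ?_⟩
    · rw [Fin.cons_injective_iff]
      refine ⟨?_, he⟩
      rintro ⟨i, hi⟩
      exact (mem_erase.1 (heX i)).1 hi
    · rw [Fin.cons_injective_iff]
      refine ⟨?_, hf⟩
      rintro ⟨i, hi⟩
      exact (mem_erase.1 (hfY i)).1 hi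
    · intro i
      refine Fin.cases ?_ (fun j => ?_) i
      · simpa using hx
      · simpa using mem_of_mem_erase (heX j)
    · intro i
      refine Fin.cases ?_ (fun j => ?_) i
      · simpa using hy
      · simpa using mem_of_mem_erase (hfY j)
    · intro i
      refine Fin.cases ?_ (fun j => ?_) i
      · simpa using hne
      · simpa using hef j

/-- The edge of the complete bipartite graph given by a pair. -/
def bEdge {p q : ℕ} (e : Fin p × Fin q) : Sym2 (Fin p ⊕ Fin q) := s(Sum.inl e.1, Sum.inr e.2)

theorem bEdge_injective {p q : ℕ} : Function.Injective (bEdge (p := p) (q := q)) := by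
  rintro ⟨a, b⟩ ⟨a', b'⟩ h
  simpa [bEdge] using h

theorem edgeFinset_bip (p q : ℕ) :
    (completeBipartiteGraph (Fin p) (Fin q)).edgeFinset = univ.image bEdge := by
  ext e
  induction e using Sym2.ind with
  | _ x y =>
    rw [SimpleGraph.mem_edgeFinset, SimpleGraph.mem_edgeSet]
    simp only [completeBipartiteGraph_adj, mem_image, mem_univ, true_and, bEdge, Prod.exists]
    rcases x with x | x <;> rcases y with y | y <;> simp

theorem assemble (p q t : ℕ) (c : Sym2 (Fin p ⊕ Fin q) → ℕ) (D : Fin t → Finset (Fin p × Fin q))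
    (hdisj : ∀ i j, i ≠ j → Disjoint (D i) (D j))
    (hinj : ∀ i, Set.InjOn (fun e => c (bEdge e)) (D i : Set (Fin p × Fin q)))
    (v0 : Fin p ⊕ Fin q)
    (hconn : ∀ i (g : Fin p ⊕ Fin q → Prop), (∀ e ∈ D i, (g (Sum.inl e.1) ↔ g (Sum.inr e.2))) →
      ∀ x, (g x ↔ g v0)) :
    HasRainbowSpanningTrees (completeBipartiteGraph (Fin p) (Fin q)) c t := by
  let R : Fin t → SimpleGraph (Fin p ⊕ Fin q) := fun i =>
    SimpleGraph.fromEdgeSet (bEdge '' (D i : Set (Fin p × Fin q)))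
  have hRe : ∀ i, (R i).edgeSet ⊆ bEdge '' (D i : Set (Fin p × Fin q)) := by
    intro i
    simp only [R, SimpleGraph.edgeSet_fromEdgeSet]
    exact Set.sdiff_subset
  have hR : ∀ i, (R i).Connected := by
    intro i
    rw [SimpleGraph.connected_iff_exists_forall_reachable]
    refine ⟨v0, fun w => ?_⟩
    refine (hconn i (fun x => (R i).Reachable v0 x) ?_ w).2 (SimpleGraph.Reachable.refl _)
    intro e he
    have hadj : (R i).Adj (Sum.inl e.1) (Sum.inr e.2) := by
      simp only [R, SimpleGraph.fromEdgeSet_adj]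
      exact ⟨⟨e, he, rfl⟩, by simp⟩
    exact ⟨fun h => h.trans hadj.reachable, fun h => h.trans hadj.symm.reachable⟩
  have hT : ∀ i, ∃ T ≤ R i, T.IsTree := fun i => (hR i).exists_isTree_le
  choose T hTR hTT using hT
  have hTe : ∀ i, (T i).edgeSet ⊆ bEdge '' (D i : Set (Fin p × Fin q)) := fun i =>
    (SimpleGraph.edgeSet_mono (hTR i)).trans (hRe i)
  refine ⟨T, ?_, hTT, ?_, ?_⟩
  · intro i
    rw [← SimpleGraph.edgeSet_subset_edgeSet]
    refine (hTe i).trans ?_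
    rintro _ ⟨e, _, rfl⟩
    rw [← SimpleGraph.mem_edgeFinset, edgeFinset_bip]
    exact mem_image_of_mem _ (mem_univ _)
  · intro i x hx y hy hxy
    obtain ⟨e, he, rfl⟩ := hTe i hx
    obtain ⟨e', he', rfl⟩ := hTe i hy
    rw [hinj i he he' hxy]
  · intro i j hij
    rw [Set.disjoint_left]
    intro x hx hy
    obtain ⟨e, he, rfl⟩ := hTe i hx
    obtain ⟨e', he', hee⟩ := hTe j hy
    have := bEdge_injective hee
    subst this
    exact Finset.disjoint_left.1 (hdisj i j hij) he he'

theorem lowerBound (p q t : ℕ) (ht : 0 < t) (K : Finset (Fin p × Fin q)) (hK : t ≤ K.card)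
    (hKc : ∀ D : Finset (Fin p × Fin q), (∀ (g : Fin p ⊕ Fin q → Prop),
      (∀ e ∈ D, (g (Sum.inl e.1) ↔ g (Sum.inr e.2))) → ∀ x y, (g x ↔ g y)) →
      ∃ e ∈ D, ∃ f ∈ D, e ≠ f ∧ e ∈ K ∧ f ∈ K) :
    ∃ c : Sym2 (Fin p ⊕ Fin q) → ℕ,
      ((completeBipartiteGraph (Fin p) (Fin q)).edgeFinset.image c).card = p * q - K.card + t ∧
      ¬ HasRainbowSpanningTrees (completeBipartiteGraph (Fin p) (Fin q)) c t := by
  obtain ⟨Z, hZK, hZ⟩ := exists_subset_card_eq (s := K) (n := K.card - (t - 1)) (by omega)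
  let enc := Fintype.equivFin (Sym2 (Fin p ⊕ Fin q))
  let c : Sym2 (Fin p ⊕ Fin q) → ℕ := fun e => if e ∈ Z.image bEdge then 0 else 1 + (enc e).1
  have hc0 : ∀ e, e ∈ Z → c (bEdge e) = 0 := by
    intro e he
    simp only [c]
    rw [if_pos (mem_image_of_mem _ he)]
  have hc1 : ∀ e, e ∉ Z → c (bEdge e) = 1 + (enc (bEdge e)).1 := by
    intro e he
    simp only [c]
    rw [if_neg]
    intro h
    obtain ⟨e', he', hee⟩ := mem_image.1 h
    exact he (bEdge_injective hee ▸ he')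
  refine ⟨c, ?_, ?_⟩
  · rw [edgeFinset_bip, image_image]
    have hsplit : (univ : Finset (Fin p × Fin q)).image (c ∘ bEdge) =
        insert 0 ((univ \ Z).image (c ∘ bEdge)) := by
      ext k
      simp only [mem_image, mem_insert, mem_sdiff, mem_univ, true_and, Function.comp]
      constructor
      · rintro ⟨e, rfl⟩
        by_cases he : e ∈ Z
        · left; exact hc0 e he
        · right; exact ⟨e, he, rfl⟩
      · rintro (rfl | ⟨e, _, rfl⟩)
        · obtain ⟨e, he⟩ := card_pos.1 (show 0 < Z.card by omega)
          exact ⟨e, hc0 e he⟩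
        · exact ⟨e, rfl⟩
    have hcardK : K.card ≤ p * q := by
      have := card_le_univ K
      simpa using this
    rw [hsplit, card_insert_of_notMem, card_image_of_injOn, card_sdiff_of_subset (subset_univ _), hZ]
    · simp only [card_univ, Fintype.card_prod, Fintype.card_fin]
      omega
    · intro e he f hf hef
      have he : e ∉ Z := by simpa using he
      have hf : f ∉ Z := by simpa using hf
      simp only [Function.comp, hc1 e he, hc1 f hf] at hef
      apply bEdge_injective
      apply enc.injective
      apply Fin.ext
      omega
    · intro h
      obtain ⟨e, he, h0⟩ := mem_image.1 h
      have he : e ∉ Z := by simpa using he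
      simp only [Function.comp, hc1 e he] at h0
      omega
  · rintro ⟨T, hTG, hTT, hTr, hTd⟩
    have hex : ∀ i, ∃ e ∈ K \ Z, bEdge e ∈ (T i).edgeSet := by
      intro i
      obtain ⟨e, he, f, hf, hef, heK, hfK⟩ := hKc (univ.filter (fun e => bEdge e ∈ (T i).edgeSet)) (by
        intro g hg x y
        obtain ⟨w⟩ := (hTT i).connected.preconnected x y
        induction w with
        | nil => rfl
        | cons h _ ih =>
          rename_i u v w _
          refine Iff.trans ?_ ih
          have hG := hTG i h
          rw [completeBipartiteGraph_adj] at hG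
          rcases u with u | u <;> rcases v with v | v <;> simp at hG
          · exact hg (u, v) (mem_filter.2 ⟨mem_univ _, h⟩)
          · exact (hg (v, u) (mem_filter.2 ⟨mem_univ _, h.symm⟩)).symm)
      have he := (mem_filter.1 he).2
      have hf := (mem_filter.1 hf).2
      by_cases heZ : e ∈ Z
      · by_cases hfZ : f ∈ Z
        · exact absurd (bEdge_injective (hTr i he hf (by rw [hc0 e heZ, hc0 f hfZ]))) hef
        · exact ⟨f, mem_sdiff.2 ⟨hfK, hfZ⟩, hf⟩
      · exact ⟨e, mem_sdiff.2 ⟨heK, heZ⟩, he⟩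
    choose e he heT using hex
    have hcard : (K \ Z).card < (univ : Finset (Fin t)).card := by
      rw [card_sdiff_of_subset hZK, hZ, card_univ, Fintype.card_fin]
      omega
    obtain ⟨i, _, j, _, hij, hee⟩ := exists_ne_map_eq_of_card_lt_of_maps_to hcard
      (f := e) (fun i _ => he i)
    exact Set.disjoint_left.1 (hTd i j hij) (heT i) (hee ▸ heT j)

/-- The pair `e` touches the vertex set `W`. -/
def touches {p q : ℕ} (W : Finset (Fin p ⊕ Fin q)) (e : Fin p × Fin q) : Prop :=
  Sum.inl e.1 ∈ W ∨ Sum.inr e.2 ∈ W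

/-- The colours on edges touching `W`. -/
noncomputable def touchCol {p q : ℕ} (C : Fin p × Fin q → ℕ) (W : Finset (Fin p ⊕ Fin q)) : Finset ℕ :=
  (univ.filter (touches W)).image C

theorem blockCount (p q : ℕ) (W : Finset (Fin p ⊕ Fin q)) {L : Type} (lab : Fin p ⊕ Fin q → L) :
    ∃ a b : L → ℕ, (∀ l, a l + b l = (Wᶜ.filter (fun v => lab v = l)).card) ∧
      (∑ l ∈ Wᶜ.image lab, a l) ≤ p ∧ (∑ l ∈ Wᶜ.image lab, b l) ≤ q ∧
      (∑ l ∈ Wᶜ.image lab, a l) + (∑ l ∈ Wᶜ.image lab, b l) + W.card = p + q ∧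
      (univ.filter (fun e : Fin p × Fin q => ¬ touches W e ∧
        lab (Sum.inl e.1) = lab (Sum.inr e.2))).card ≤ ∑ l ∈ Wᶜ.image lab, a l * b l := by
  let A : L → Finset (Fin p) := fun l =>
    (univ.filter (fun a => Sum.inl a ∉ W)).filter (fun a => lab (Sum.inl a) = l)
  let B : L → Finset (Fin q) := fun l =>
    (univ.filter (fun a => Sum.inr a ∉ W)).filter (fun a => lab (Sum.inr a) = l)
  have hab : ∀ l, (A l).card + (B l).card = (Wᶜ.filter (fun v => lab v = l)).card := by
    intro l
    rw [← card_disjSum]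
    congr 1
    ext v
    rcases v with v | v <;> simp [A, B]
  have hA : ∑ l ∈ Wᶜ.image lab, (A l).card = (univ.filter (fun a : Fin p => Sum.inl a ∉ W)).card := by
    rw [card_eq_sum_card_fiberwise (t := Wᶜ.image lab) (f := fun a => lab (Sum.inl a))]
    intro a ha
    have : Sum.inl a ∉ W := by simpa using ha
    exact mem_coe.2 (mem_image_of_mem lab (by simpa using this))
  have hB : ∑ l ∈ Wᶜ.image lab, (B l).card = (univ.filter (fun a : Fin q => Sum.inr a ∉ W)).card := by
    rw [card_eq_sum_card_fiberwise (t := Wᶜ.image lab) (f := fun a => lab (Sum.inr a))]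
    intro a ha
    have : Sum.inr a ∉ W := by simpa using ha
    exact mem_coe.2 (mem_image_of_mem lab (by simpa using this))
  refine ⟨fun l => (A l).card, fun l => (B l).card, hab, ?_, ?_, ?_, ?_⟩
  · rw [hA]; exact (card_le_univ _).trans (by simp)
  · rw [hB]; exact (card_le_univ _).trans (by simp)
  · have h1 : ∑ l ∈ Wᶜ.image lab, ((A l).card + (B l).card) = Wᶜ.card := by
      simp_rw [hab]
      rw [card_eq_sum_card_fiberwise (t := Wᶜ.image lab) (f := lab)]
      intro a ha
      exact mem_coe.2 (mem_image_of_mem lab ha)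
    rw [sum_add_distrib] at h1
    rw [h1, card_compl]
    have := card_le_univ W
    simp only [Fintype.card_sum, Fintype.card_fin] at this ⊢
    omega
  · calc _ ≤ ((Wᶜ.image lab).biUnion (fun l => A l ×ˢ B l)).card := by
          apply card_le_card
          intro e he
          obtain ⟨_, ht, hl⟩ := mem_filter.1 he
          simp only [touches, not_or] at ht
          refine mem_biUnion.2 ⟨lab (Sum.inl e.1), mem_image_of_mem _ (by simpa using ht.1), ?_⟩
          simp only [mem_product, A, B, mem_filter, mem_univ, true_and]
          exact ⟨⟨ht.1, trivial⟩, ht.2, hl.symm⟩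
      _ ≤ ∑ l ∈ Wᶜ.image lab, (A l ×ˢ B l).card := card_biUnion_le
      _ = _ := by simp_rw [card_product]

theorem partitionCond (p q t : ℕ) (ht : 0 < t) (hq : 2 * t + 1 ≤ q) (hpq : q ≤ p)
    (C : Fin p × Fin q → ℕ)
    (hM : (p - 2) * q + t + (if p = q then 1 else 0) + 1 ≤ (univ.image C).card)
    (W : Finset (Fin p ⊕ Fin q)) (hW : W.card ≤ 2)
    (hmax : ∀ W' : Finset (Fin p ⊕ Fin q), W'.card ≤ 2 →
      t * W'.card + (touchCol C W).card ≤ t * W.card + (touchCol C W').card)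
    (L : Type) (lab : Fin p ⊕ Fin q → L) :
    t * ((Wᶜ.image lab).card - 1) ≤
      (((univ.filter (fun e => C e ∉ touchCol C W)).filter
        (fun e => lab (Sum.inl e.1) ≠ lab (Sum.inr e.2))).image C).card := by
  set E := univ.filter (fun e => C e ∉ touchCol C W) with hE
  set Cr := (E.filter (fun e => lab (Sum.inl e.1) ≠ lab (Sum.inr e.2))).image C with hCr
  set Λ := Wᶜ.image lab with hΛ
  have hET : ∀ e ∈ E, ¬ touches W e := by
    intro e he ht
    exact (mem_filter.1 he).2 (mem_image_of_mem _ (mem_filter.2 ⟨mem_univ _, ht⟩))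
  have hk : (touchCol C W).card ≤ t * W.card := by
    have := hmax ∅ (by simp)
    have h0 : touchCol C (∅ : Finset (Fin p ⊕ Fin q)) = ∅ := by
      simp [touchCol, touches]
    rw [h0] at this
    simpa using this
  obtain ⟨a, b, hab, hap, hbq, hsum, hN⟩ := blockCount p q W lab
  rw [← hΛ] at hap hbq hsum hN
  set N := (univ.filter (fun e : Fin p × Fin q => ¬ touches W e ∧
        lab (Sum.inl e.1) = lab (Sum.inr e.2))) with hNdef
  have hcount : (univ.image C).card ≤ (touchCol C W).card + Cr.card + N.card := by
    have hsub : univ.image C ⊆ (touchCol C W ∪ Cr) ∪ N.image C := by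
      intro k hk
      obtain ⟨e, _, rfl⟩ := mem_image.1 hk
      by_cases h1 : C e ∈ touchCol C W
      · exact mem_union_left _ (mem_union_left _ h1)
      have heE : e ∈ E := mem_filter.2 ⟨mem_univ _, h1⟩
      by_cases h2 : lab (Sum.inl e.1) = lab (Sum.inr e.2)
      · exact mem_union_right _ (mem_image_of_mem _ (mem_filter.2 ⟨mem_univ _, hET e heE, h2⟩))
      · exact mem_union_left _ (mem_union_right _ (mem_image_of_mem _ (mem_filter.2 ⟨heE, h2⟩)))
    calc _ ≤ _ := card_le_card hsub
      _ ≤ _ := card_union_le _ _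
      _ ≤ _ := add_le_add (card_union_le _ _) card_image_le
  have hpos : ∀ l ∈ Λ, 1 ≤ a l + b l := by
    intro l hl
    rw [hab]
    obtain ⟨v, hv, rfl⟩ := mem_image.1 hl
    exact card_pos.2 ⟨v, mem_filter.2 ⟨hv, rfl⟩⟩
  by_cases hs : Λ.card ≤ 1
  · have : Λ.card - 1 = 0 := by omega
    rw [this]; simp
  by_cases hbig : 3 ≤ Λ.card - 1 + W.card
  · obtain ⟨l0, hl0⟩ := card_pos.1 (show 0 < Λ.card by omega)
    obtain ⟨x, y, hx, hy, hxy, h1, hm⟩ := mergeBlocks a b (Λ.erase l0)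
      (fun l hl => hpos l (mem_of_mem_erase hl)) (a l0) (b l0) (hpos l0 hl0)
    rw [add_sum_erase _ _ hl0] at hx hy
    rw [add_sum_erase _ (fun l => a l * b l) hl0] at hm
    have e1 := add_sum_erase _ a hl0
    have e2 := add_sum_erase _ b hl0
    rw [card_erase_of_mem hl0] at hxy
    have := numThree p q t x y (Λ.card - 1 + W.card) ht hq hpq (by omega) (by omega) (by omega) h1 hbig
    rw [mul_add] at this
    omega
  by_cases htwo : ∃ l1 ∈ Λ, ∃ l2 ∈ Λ, l1 ≠ l2 ∧ 2 ≤ a l1 + b l1 ∧ 2 ≤ a l2 + b l2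
  · obtain ⟨l1, hl1, l2, hl2, hne, hb1, hb2⟩ := htwo
    have hl2' : l2 ∈ Λ.erase l1 := mem_erase.2 ⟨hne.symm, hl2⟩
    obtain ⟨x0, y0, hx0, hy0, hxy0, hm0⟩ := mergeTwo _ _ _ _ hb1 hb2
    obtain ⟨x, y, hx, hy, hxy, h1, hm⟩ := mergeBlocks a b ((Λ.erase l1).erase l2)
      (fun l hl => hpos l (mem_of_mem_erase (mem_of_mem_erase hl))) x0 y0 (by omega)
    have e1 := add_sum_erase _ a hl1
    have e2 := add_sum_erase _ b hl1
    have e3 := add_sum_erase _ a hl2'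
    have e4 := add_sum_erase _ b hl2'
    have e5 := add_sum_erase _ (fun l => a l * b l) hl1
    have e6 := add_sum_erase _ (fun l => a l * b l) hl2'
    rw [card_erase_of_mem hl2', card_erase_of_mem hl1] at hxy
    by_cases h3 : Λ.card + W.card = 2
    · have h2 := numTwo p q x y (by omega) hpq (by omega) (by omega) (by omega)
      have hw0 : W.card = 0 := by omega
      have hs2 : Λ.card - 1 = 1 := by omega
      rw [hs2]
      rw [hw0] at hk
      omega
    · have := numThree p q t x y 3 ht hq hpq (by omega) (by omega) (by omega) h1 le_rfl
      have h4 : (W.card = 1 ∧ Λ.card - 1 = 1) ∨ (W.card = 0 ∧ Λ.card - 1 = 2) := by omega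
      rcases h4 with ⟨h4, h5⟩ | ⟨h4, h5⟩
      · rw [h4] at hk
        rw [h5]
        omega
      · rw [h4] at hk
        rw [h5]
        omega
  · push Not at htwo
    have : ∃ l0 ∈ Λ, ∀ l ∈ Λ, l ≠ l0 → a l + b l ≤ 1 := by
      by_cases h : ∃ l0 ∈ Λ, 2 ≤ a l0 + b l0
      · obtain ⟨l0, hl0, hb⟩ := h
        refine ⟨l0, hl0, fun l hl hne => ?_⟩
        have := htwo l0 hl0 l hl hne.symm hb
        omega
      · push Not at h
        obtain ⟨l0, hl0⟩ := card_pos.1 (show 0 < Λ.card by omega)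
        exact ⟨l0, hl0, fun l hl _ => by have := h l hl; omega⟩
    obtain ⟨l0, hl0, hsing⟩ := this
    have hsing' : ∀ v ∈ Wᶜ, ∀ w ∈ Wᶜ, lab v = lab w → lab v ≠ l0 → v = w := by
      intro v hv w hw hvw hne
      have h1 := hsing (lab v) (mem_image_of_mem _ hv) hne
      rw [hab] at h1
      exact card_le_one.1 h1 v (mem_filter.2 ⟨hv, rfl⟩) w (mem_filter.2 ⟨hw, hvw.symm⟩)
    set W' := Wᶜ.filter (fun v => lab v ≠ l0) with hW'
    have hW'c : W'.card = Λ.card - 1 := by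
      rw [← card_erase_of_mem hl0, ← card_image_of_injOn (s := W') (f := lab)]
      · congr 1
        ext l
        simp only [mem_image, mem_erase, hW', mem_filter, hΛ]
        constructor
        · rintro ⟨v, ⟨hv, hne⟩, rfl⟩
          exact ⟨hne, v, hv, rfl⟩
        · rintro ⟨hne, v, hv, rfl⟩
          exact ⟨v, ⟨hv, hne⟩, rfl⟩
      · intro v hv w hw hvw
        have hv := mem_filter.1 hv
        have hw := mem_filter.1 hw
        exact hsing' v hv.1 w hw.1 hvw hv.2
    have hdis : Disjoint W W' := by
      rw [Finset.disjoint_left]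
      intro v hv hv'
      exact (mem_compl.1 (mem_filter.1 hv').1) hv
    have hcu := card_union_of_disjoint hdis
    have hmx := hmax (W ∪ W') (by omega)
    have hsub : touchCol C (W ∪ W') ⊆ touchCol C W ∪ Cr := by
      intro k hk
      obtain ⟨e, he, rfl⟩ := mem_image.1 hk
      by_cases h1 : C e ∈ touchCol C W
      · exact mem_union_left _ h1
      have heE : e ∈ E := mem_filter.2 ⟨mem_univ _, h1⟩
      refine mem_union_right _ (mem_image_of_mem _ (mem_filter.2 ⟨heE, ?_⟩))
      have hnt := hET e heE
      have htt := (mem_filter.1 he).2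
      simp only [touches, not_or] at hnt htt
      intro hl
      rcases htt with h | h
      · have h := (mem_union.1 h).resolve_left hnt.1
        have := hsing' _ (mem_filter.1 h).1 _ (mem_compl.2 hnt.2) hl (mem_filter.1 h).2
        simp at this
      · have h := (mem_union.1 h).resolve_left hnt.2
        have := hsing' _ (mem_filter.1 h).1 _ (mem_compl.2 hnt.1) hl.symm (mem_filter.1 h).2
        simp at this
    have h1 := card_le_card hsub
    have h2 := card_union_le (touchCol C W) Cr
    rw [hcu, mul_add, hW'c] at hmx
    omega

theorem starCard {p q : ℕ} (n : ℕ) (hp : n + 1 ≤ p) (hq : n + 1 ≤ q) (u v : Fin p ⊕ Fin q) (h : u ≠ v) :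
    n ≤ (univ.filter (fun e => touches {u} e ∧ ¬ touches {v} e)).card := by
  rcases u with u | u
  · have : (univ.filter (fun b : Fin q => Sum.inr b ≠ v)).image (fun b => (u, b)) ⊆
        (univ.filter (fun e => touches {Sum.inl u} e ∧ ¬ touches {v} e)) := by
      intro e he
      obtain ⟨b, hb, rfl⟩ := mem_image.1 he
      have := (mem_filter.1 hb).2
      simp [touches, this, h]
    refine le_trans ?_ (card_le_card this)
    rw [card_image_of_injective _ (fun b b' hb => (Prod.mk.inj hb).2)]
    have h1 : (univ.filter (fun b : Fin q => ¬ Sum.inr b ≠ v)).card ≤ 1 := by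
      rw [card_le_one]
      intro x hx y hy
      have hx := (mem_filter.1 hx).2
      have hy := (mem_filter.1 hy).2
      push Not at hx hy
      exact Sum.inr_injective (hx.trans hy.symm)
    have h2 := card_filter_add_card_filter_not (s := (univ : Finset (Fin q)))
      (fun b => (Sum.inr b : Fin p ⊕ Fin q) ≠ v)
    rw [card_univ, Fintype.card_fin] at h2
    omega
  · have : (univ.filter (fun b : Fin p => Sum.inl b ≠ v)).image (fun b => (b, u)) ⊆
        (univ.filter (fun e => touches {Sum.inr u} e ∧ ¬ touches {v} e)) := by
      intro e he
      obtain ⟨b, hb, rfl⟩ := mem_image.1 he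
      have := (mem_filter.1 hb).2
      simp [touches, this, h]
    refine le_trans ?_ (card_le_card this)
    rw [card_image_of_injective _ (fun b b' hb => (Prod.mk.inj hb).1)]
    have h1 : (univ.filter (fun b : Fin p => ¬ Sum.inl b ≠ v)).card ≤ 1 := by
      rw [card_le_one]
      intro x hx y hy
      have hx := (mem_filter.1 hx).2
      have hy := (mem_filter.1 hy).2
      push Not at hx hy
      exact Sum.inl_injective (hx.trans hy.symm)
    have h2 := card_filter_add_card_filter_not (s := (univ : Finset (Fin p)))
      (fun b => (Sum.inl b : Fin p ⊕ Fin q) ≠ v)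
    rw [card_univ, Fintype.card_fin] at h2
    omega

/-- If `g` is constant off `W` and an edge touches `u ∈ W` with its other end where `g` is known,
then `g u` is known. -/
theorem cutExtend {p q : ℕ} (g : Fin p ⊕ Fin q → Prop) (Q : Prop) (u : Fin p ⊕ Fin q)
    (e : Fin p × Fin q) (he : touches {u} e) (hg : g (Sum.inl e.1) ↔ g (Sum.inr e.2))
    (hQ : ∀ x, x ≠ u → (x = Sum.inl e.1 ∨ x = Sum.inr e.2) → (g x ↔ Q)) : g u ↔ Q := by
  rcases he with h | h
  · rw [mem_singleton] at h
    rw [← h, hg]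
    exact hQ _ (by rw [← h]; simp) (Or.inr rfl)
  · rw [mem_singleton] at h
    rw [← h, ← hg]
    exact hQ _ (by rw [← h]; simp) (Or.inl rfl)

theorem nonTouchCount (p q : ℕ) (W : Finset (Fin p ⊕ Fin q)) (v0 : Fin p ⊕ Fin q) (hv0 : v0 ∈ Wᶜ)
    {L : Type} (l0 : L) : ∃ x y : ℕ, x ≤ p ∧ y ≤ q ∧ x + y + W.card = p + q ∧
      (univ.filter (fun e : Fin p × Fin q => ¬ touches W e)).card ≤ x * y := by
  obtain ⟨a, b, _, hap, hbq, hsum, hN⟩ := blockCount p q W (fun _ => l0)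
  have himg : Wᶜ.image (fun _ => l0) = {l0} := by
    ext x
    rw [mem_image, mem_singleton]
    constructor
    · rintro ⟨_, _, h⟩
      exact h.symm
    · intro h
      exact ⟨v0, hv0, h.symm⟩
  rw [himg] at hap hbq hsum hN
  simp only [sum_singleton] at hap hbq hsum hN
  refine ⟨a l0, b l0, hap, hbq, hsum, le_trans (card_le_card ?_) hN⟩
  intro e he
  rw [mem_filter] at he ⊢
  exact ⟨he.1, he.2, by trivial⟩

theorem upperBound (p q t : ℕ) (ht : 0 < t) (hq : 2 * t + 1 ≤ q) (hpq : q ≤ p)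
    (c : Sym2 (Fin p ⊕ Fin q) → ℕ)
    (hM : (p - 2) * q + t + (if p = q then 1 else 0) + 1 ≤
      ((completeBipartiteGraph (Fin p) (Fin q)).edgeFinset.image c).card) :
    HasRainbowSpanningTrees (completeBipartiteGraph (Fin p) (Fin q)) c t := by
  rw [edgeFinset_bip, image_image] at hM
  set C : Fin p × Fin q → ℕ := c ∘ bEdge with hC
  obtain ⟨W, hWm, hmax⟩ := exists_max_image
    ((univ : Finset (Finset (Fin p ⊕ Fin q))).filter (fun W => W.card ≤ 2))
    (fun W => ((t * W.card : ℕ) : ℤ) - (touchCol C W).card) ⟨∅, by simp⟩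
  have hW : W.card ≤ 2 := (mem_filter.1 hWm).2
  have hmax' : ∀ W' : Finset (Fin p ⊕ Fin q), W'.card ≤ 2 →
      t * W'.card + (touchCol C W).card ≤ t * W.card + (touchCol C W').card := by
    intro W' hW'
    have := hmax W' (mem_filter.2 ⟨mem_univ _, hW'⟩)
    omega
  have hWc : 0 < Wᶜ.card := by
    rw [card_compl]
    simp only [Fintype.card_sum, Fintype.card_fin]
    omega
  obtain ⟨v0, hv0⟩ := card_pos.1 hWc
  have hET : ∀ e, C e ∉ touchCol C W → ¬ touches W e := fun e he ht =>
    he (mem_image_of_mem _ (mem_filter.2 ⟨mem_univ _, ht⟩))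
  obtain ⟨F, hFE, hFr, hFc⟩ := packing Wᶜ v0 hv0 (univ.filter (fun e => C e ∉ touchCol C W))
    (fun e => Sum.inl e.1) (fun e => Sum.inr e.2) (by
      intro e he
      have := hET e (mem_filter.1 he).2
      simp only [touches, not_or] at this
      exact ⟨mem_compl.2 this.1, mem_compl.2 this.2⟩) C t
    (fun L lab => partitionCond p q t ht hq hpq C hM W hW hmax' L lab)
  -- it suffices to find connecting edges at `W`
  suffices hX : ∃ X : Fin t → Finset (Fin p × Fin q), (∀ i, ∀ e ∈ X i, touches W e) ∧
      (∀ i j, i ≠ j → Disjoint (X i) (X j)) ∧ (∀ i, Set.InjOn C (X i : Set (Fin p × Fin q))) ∧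
      (∀ i (g : Fin p ⊕ Fin q → Prop) (Q : Prop), (∀ x ∈ Wᶜ, (g x ↔ Q)) →
        (∀ e ∈ X i, (g (Sum.inl e.1) ↔ g (Sum.inr e.2))) → ∀ x ∈ W, (g x ↔ Q)) by
    obtain ⟨X, hXt, hXd, hXi, hXc⟩ := hX
    have hcol : ∀ i j, ∀ e ∈ F i, ∀ f ∈ X j, C e ≠ C f := by
      intro i j e he f hf hef
      apply (mem_filter.1 (hFE i he)).2
      rw [hef]
      exact mem_image_of_mem _ (mem_filter.2 ⟨mem_univ _, hXt j f hf⟩)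
    refine assemble p q t c (fun i => F i ∪ X i) ?_ ?_ v0 ?_
    · intro i j hij
      rw [Finset.disjoint_left]
      intro e he he'
      rcases mem_union.1 he with h | h <;> rcases mem_union.1 he' with h' | h'
      · exact hij (hFr i j e e h h' rfl).1
      · exact hcol i j e h e h' rfl
      · exact hcol j i e h' e h rfl
      · exact Finset.disjoint_left.1 (hXd i j hij) h h'
    · intro i e he f hf hef
      have hef : C e = C f := hef
      rcases mem_union.1 (mem_coe.1 he) with h | h <;> rcases mem_union.1 (mem_coe.1 hf) with h' | h'
      · exact (hFr i i e f h h' hef).2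
      · exact absurd hef (hcol i i e h f h')
      · exact absurd hef.symm (hcol i i f h' e h)
      · exact hXi i h h' hef
    · intro i g hg x
      have h1 := hFc i g (fun e he => hg e (mem_union_left _ he))
      by_cases hx : x ∈ W
      · exact hXc i g (g v0) h1 (fun e he => hg e (mem_union_right _ he)) x hx
      · exact h1 x (mem_compl.2 hx)
  have hcases : W.card = 0 ∨ W.card = 1 ∨ W.card = 2 := by omega
  rcases hcases with h0 | h1 | h2
  · rw [card_eq_zero] at h0
    subst h0
    exact ⟨fun _ => ∅, by simp, by simp, by simp, by simp⟩
  · obtain ⟨u, rfl⟩ := card_eq_one.1 h1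
    have hv0u : u ≠ v0 := by
      rintro rfl
      simp at hv0
    have hst := starCard t (by omega) (by omega) u v0 hv0u
    obtain ⟨Z, hZ, hZc⟩ := exists_subset_card_eq hst
    let en := Z.equivFinOfCardEq hZc
    refine ⟨fun i => {(en.symm i).1}, ?_, ?_, ?_, ?_⟩
    · intro i e he
      rw [mem_singleton] at he
      rw [he]
      exact (mem_filter.1 (hZ (en.symm i).2)).2.1
    · intro i j hij
      rw [disjoint_singleton]
      intro h
      exact hij (en.symm.injective (Subtype.ext h))
    · intro i
      simp
    · intro i g Q hQ hg x hx
      rw [mem_singleton] at hx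
      subst hx
      refine cutExtend g Q x _ (mem_filter.1 (hZ (en.symm i).2)).2.1 (hg _ (mem_singleton_self _)) ?_
      intro y hy _
      exact hQ y (by simpa using hy)
  · obtain ⟨u, v, huv, rfl⟩ := card_eq_two.1 h2
    obtain ⟨t, rfl⟩ := Nat.exists_eq_add_of_le' ht
    have htu : ∀ e, touches {u, v} e ↔ touches {u} e ∨ touches {v} e := by
      intro e
      simp only [touches, mem_insert, mem_singleton]
      tauto
    set X := univ.filter (fun e => touches {u} e ∧ ¬ touches {v} e) with hX
    set Y := univ.filter (fun e : Fin p × Fin q => touches {v} e) with hY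
    have hXY : X ∪ Y = univ.filter (touches {u, v}) := by
      ext e
      simp only [hX, hY, mem_union, mem_filter, mem_univ, true_and, htu]
      by_cases h : touches {v} e <;> simp [h]
    have hd : Disjoint X Y := by
      rw [Finset.disjoint_left]
      intro e he he'
      exact (mem_filter.1 he).2.2 (mem_filter.1 he').2
    have hXc : t + 1 ≤ X.card := starCard (t + 1) (by omega) (by omega) u v huv
    have hYc : t + 1 ≤ Y.card := by
      refine (starCard (t + 1) (by omega) (by omega) v u huv.symm).trans (card_le_card ?_)
      intro e he
      exact mem_filter.2 ⟨mem_univ _, (mem_filter.1 he).2.1⟩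
    have hcol : t + 2 ≤ ((X ∪ Y).image C).card := by
      rw [hXY]
      obtain ⟨x, y, hap, hbq, hsum, hN⟩ := nonTouchCount p q {u, v} v0 hv0 ()
      have hc1 : (univ.image C).card ≤ ((univ.filter (touches {u, v})).image C).card +
          (univ.filter (fun e : Fin p × Fin q => ¬ touches {u, v} e)).card := by
        have : univ.image C ⊆ (univ.filter (touches {u, v})).image C ∪
          (univ.filter (fun e : Fin p × Fin q => ¬ touches {u, v} e)).image C := by
          intro k hk
          obtain ⟨e, _, rfl⟩ := mem_image.1 hk
          by_cases h : touches {u, v} e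
          · exact mem_union_left _ (mem_image_of_mem _ (mem_filter.2 ⟨mem_univ _, h⟩))
          · exact mem_union_right _ (mem_image_of_mem _ (mem_filter.2 ⟨mem_univ _, h⟩))
        calc _ ≤ _ := card_le_card this
          _ ≤ _ := card_union_le _ _
          _ ≤ _ := add_le_add le_rfl card_image_le
      rw [h2] at hsum
      have := numTwo p q _ _ (by omega) hpq hap hbq hsum
      omega
    obtain ⟨e, f, he, hf, heX, hfY, hef⟩ := rainbowMatching C t X Y hd hXc hYc (by convert hcol)
    have hne : ∀ i j, e i ≠ f j := by
      intro i j h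
      exact Finset.disjoint_left.1 hd (heX i) (h ▸ hfY j)
    have heX' : ∀ i, touches {u} (e i) ∧ ¬ touches {v} (e i) := fun i => (mem_filter.1 (heX i)).2
    have hfY' : ∀ i, touches {v} (f i) := fun i => (mem_filter.1 (hfY i)).2
    refine ⟨fun i => {e i, f i}, ?_, ?_, ?_, ?_⟩
    · intro i z hz
      rw [htu]
      rcases mem_insert.1 hz with h | h
      · rw [h]; exact Or.inl (heX' i).1
      · rw [mem_singleton.1 h]; exact Or.inr (hfY' i)
    · intro i j hij
      rw [Finset.disjoint_left]
      intro z hz hz'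
      simp only [mem_insert, mem_singleton] at hz hz'
      rcases hz with rfl | rfl <;> rcases hz' with h | h
      · exact hij (he h)
      · exact hne _ _ h
      · exact hne _ _ h.symm
      · exact hij (hf h)
    · intro i z hz z' hz' hzz
      simp only [coe_insert, coe_singleton, Set.mem_insert_iff, Set.mem_singleton_iff] at hz hz'
      rcases hz with rfl | rfl <;> rcases hz' with rfl | rfl
      · rfl
      · exact absurd hzz (hef i)
      · exact absurd hzz.symm (hef i)
      · rfl
    · intro i g Q hQ hg
      have hu : g u ↔ Q := by
        refine cutExtend g Q u (e i) (heX' i).1 (hg _ (by simp)) ?_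
        intro y hy hy'
        apply hQ y
        have : y ≠ v := by
          rintro rfl
          apply (heX' i).2
          simp only [touches, mem_singleton]
          rcases hy' with h | h
          · exact Or.inl h.symm
          · exact Or.inr h.symm
        simp [hy, this]
      have hv : g v ↔ Q := by
        refine cutExtend g Q v (f i) (hfY' i) (hg _ (by simp)) ?_
        intro y hy _
        by_cases hyu : y = u
        · rw [hyu]; exact hu
        · apply hQ y
          simp [hy, hyu]
      intro x hx
      rcases mem_insert.1 hx with h | h
      · rw [h]; exact hu
      · rw [mem_singleton.1 h]; exact hv

theorem propAux (a b c d : Prop) (he : ¬ (a ↔ b)) (hf : ¬ (c ↔ d)) (hd : ¬ (a ∨ c ↔ b ∨ d))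
    (h4 : ¬ (a ∧ c)) (h5 : ¬ (b ∧ d)) : False := by
  tauto

theorem lowerWitness (p q t : ℕ) (ht : 0 < t) (hq : 2 * t + 1 ≤ q) (hpq : q ≤ p) :
    ∃ c : Sym2 (Fin p ⊕ Fin q) → ℕ,
      ((completeBipartiteGraph (Fin p) (Fin q)).edgeFinset.image c).card =
        (p - 2) * q + t + (if p = q then 1 else 0) ∧
      ¬ HasRainbowSpanningTrees (completeBipartiteGraph (Fin p) (Fin q)) c t := by
  -- generic two-vertex isolation
  have gen : ∀ u v w : Fin p ⊕ Fin q, u ≠ v → u ≠ w → v ≠ w →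
      ∀ D : Finset (Fin p × Fin q), (∀ (g : Fin p ⊕ Fin q → Prop),
      (∀ e ∈ D, (g (Sum.inl e.1) ↔ g (Sum.inr e.2))) → ∀ x y, (g x ↔ g y)) →
      ∃ e ∈ D, ∃ f ∈ D, e ≠ f ∧ e ∈ univ.filter (touches {u, v}) ∧
        f ∈ univ.filter (touches {u, v}) := by
    intro u v w huv huw hvw D hD
    by_contra hcon
    push Not at hcon
    have hone : ∀ e ∈ D, ∀ f ∈ D, touches {u, v} e → touches {u, v} f → e = f := by
      intro e he f hf h1 h2
      by_contra hne
      exact hcon e he f hf hne (mem_filter.2 ⟨mem_univ _, h1⟩) (mem_filter.2 ⟨mem_univ _, h2⟩)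
    have hex : ∀ g : Fin p ⊕ Fin q → Prop, ∀ x y, g x → ¬ g y →
        ∃ e ∈ D, ¬ (g (Sum.inl e.1) ↔ g (Sum.inr e.2)) := by
      intro g x y hx hy
      by_contra h
      push Not at h
      exact hy ((hD g (fun e he => by have := h e he; tauto) x y).1 hx)
    obtain ⟨e, heD, he⟩ := hex (fun x => x = u) u v rfl huv.symm
    obtain ⟨f, hfD, hf⟩ := hex (fun x => x = v) v u rfl huv
    obtain ⟨d, hdD, hd⟩ := hex (fun x => x = u ∨ x = v) u w (Or.inl rfl) (by
      rintro (h | h)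
      · exact huw h.symm
      · exact hvw h.symm)
    have te : touches {u, v} e := by
      simp only [touches, mem_insert, mem_singleton]; tauto
    have tf : touches {u, v} f := by
      simp only [touches, mem_insert, mem_singleton]; tauto
    have td : touches {u, v} d := by
      simp only [touches, mem_insert, mem_singleton]; tauto
    have h1 := hone e heD f hfD te tf
    have h2 := hone e heD d hdD te td
    subst h1
    subst h2
    have h4 : ¬ ((Sum.inl e.1 : Fin p ⊕ Fin q) = u ∧ (Sum.inl e.1 : Fin p ⊕ Fin q) = v) :=
      fun h => huv (h.1.symm.trans h.2)
    have h5 : ¬ ((Sum.inr e.2 : Fin p ⊕ Fin q) = u ∧ (Sum.inr e.2 : Fin p ⊕ Fin q) = v) :=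
      fun h => huv (h.1.symm.trans h.2)
    exact propAux _ _ _ _ he hf hd h4 h5
  have hp2 : 3 ≤ p := by omega
  by_cases hpe : p = q
  · subst hpe
    rw [if_pos rfl]
    let z : Fin p := ⟨0, by omega⟩
    let o : Fin p := ⟨1, by omega⟩
    have hK : (univ.filter (touches ({Sum.inl z, Sum.inr z} : Finset (Fin p ⊕ Fin p)))).card
        = 2 * p - 1 := by
      have : univ.filter (touches ({Sum.inl z, Sum.inr z} : Finset (Fin p ⊕ Fin p))) =
        univ \ ((univ.erase z) ×ˢ (univ.erase z)) := by
        ext e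
        simp [touches]
        tauto
      rw [this, card_sdiff_of_subset (subset_univ _), card_product, card_erase_of_mem (mem_univ _)]
      simp only [card_univ, Fintype.card_prod, Fintype.card_fin]
      obtain ⟨p', rfl⟩ := Nat.exists_eq_add_of_le' (show 1 ≤ p by omega)
      simp only [Nat.add_sub_cancel]
      have : (p' + 1) * (p' + 1) = p' * p' + (2 * (p' + 1) - 1) := by
        have : 2 * (p' + 1) - 1 = 2 * p' + 1 := by omega
        rw [this]; ring
      omega
    obtain ⟨c, hc, hn⟩ := lowerBound p p t ht _ (by rw [hK]; omega)
      (gen (Sum.inl z) (Sum.inr z) (Sum.inl o) (by simp) (by simp [z, o]) (by simp))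
    refine ⟨c, ?_, hn⟩
    rw [hc, hK]
    obtain ⟨p', rfl⟩ := Nat.exists_eq_add_of_le' (show 2 ≤ p by omega)
    simp only [Nat.add_sub_cancel]
    have : (p' + 2) * (p' + 2) = p' * (p' + 2) + 2 * (p' + 2) := by ring
    omega
  · rw [if_neg hpe]
    let z : Fin p := ⟨0, by omega⟩
    let o : Fin p := ⟨1, by omega⟩
    let w : Fin q := ⟨0, by omega⟩
    have hzo : z ≠ o := by simp [z, o]
    have hK : (univ.filter (touches ({Sum.inl z, Sum.inl o} : Finset (Fin p ⊕ Fin q)))).card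
        = 2 * q := by
      have : univ.filter (touches ({Sum.inl z, Sum.inl o} : Finset (Fin p ⊕ Fin q))) =
        ({z, o} : Finset (Fin p)) ×ˢ univ := by
        ext e
        simp [touches]
      rw [this, card_product, card_pair hzo]
      simp
    obtain ⟨c, hc, hn⟩ := lowerBound p q t ht _ (by rw [hK]; omega)
      (gen (Sum.inl z) (Sum.inl o) (Sum.inr w) (by simpa using hzo) (by simp) (by simp))
    refine ⟨c, ?_, hn⟩
    rw [hc, hK]
    rw [Nat.sub_mul]
    omega

/-- For `p ≥ q ≥ 2t + 1`, the anti-Ramsey number of `t`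
edge-disjoint rainbow spanning trees in `K_{p,q}` is `(p-2)q + t + δ_{pq}`. -/
theorem stmt18 (p q t : ℕ) (ht : 0 < t) (hq : 2 * t + 1 ≤ q) (hpq : q ≤ p) :
    antiRamsey (completeBipartiteGraph (Fin p) (Fin q)) t =
      (p - 2) * q + t + (if p = q then 1 else 0) := by
  have hub : ∀ m ∈ {m | ∃ c : Sym2 (Fin p ⊕ Fin q) → ℕ,
      ((completeBipartiteGraph (Fin p) (Fin q)).edgeFinset.image c).card = m ∧
      ¬ HasRainbowSpanningTrees (completeBipartiteGraph (Fin p) (Fin q)) c t},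
      m ≤ (p - 2) * q + t + (if p = q then 1 else 0) := by
    rintro m ⟨c, rfl, hn⟩
    by_contra hlt
    exact hn (upperBound p q t ht hq hpq c (by omega))
  unfold antiRamsey
  apply le_antisymm
  · exact csSup_le' hub
  · exact le_csSup ⟨_, hub⟩ (lowerWitness p q t ht hq hpq)
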